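/- arXiv:2605.08661 — 3 statements merged into one kernel-verified Lean document; each statement's English description precedes it below -/
import Mathlib

section
/- Let A, B, C, D be near Williamson matrices of order n. Then there exists a Hadamard matrix of order 4n; explicitly, with R the n×n back circulant (0,1)-matrix whose first row is (0, …, 0, 1), the 4n×4n block matrix W = [[AR, B, C, D], [-B, AR, D, -C], [-C, -D, AR, B], [-D, C, -B, AR]] is a Hadamard matrix of order 4n. -/
open Matrix

/-- `X` is circulant: `x_{ij} = x_{0, j-i}` with indices mod `n`. -/
def IsCirculant {n : ℕ} {α : Type*} (X : Matrix (ZMod n) (ZMod n) α) : Prop :=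
  ∀ i j, X i j = X 0 (j - i)

/-- `X` is a `(-1,1)`-matrix. -/
def IsPM1 {n : ℕ} (X : Matrix (ZMod n) (ZMod n) ℝ) : Prop :=
  ∀ i j, X i j = 1 ∨ X i j = -1

/-- `A, B, C, D` are near Williamson matrices of order `n`. -/
def IsNearWilliamson (n : ℕ) [NeZero n] (A B C D : Matrix (ZMod n) (ZMod n) ℝ) : Prop :=
  IsPM1 A ∧ IsPM1 B ∧ IsPM1 C ∧ IsPM1 D ∧
  IsCirculant A ∧ IsCirculant B ∧ IsCirculant C ∧ IsCirculant D ∧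
  B.IsSymm ∧ C.IsSymm ∧ D.IsSymm ∧
  A * Aᵀ + B * Bᵀ + C * Cᵀ + D * Dᵀ = (4 * n : ℝ) • 1

/-- The back circulant `(0,1)`-matrix `R` whose first row is `(0, …, 0, 1)`. -/
def Rmat (n : ℕ) : Matrix (ZMod n) (ZMod n) ℝ :=
  Matrix.of fun i j => if i + j = -1 then 1 else 0

/-!
Call `X` and `Y` amicable if `X * Yᵀ = Y * Xᵀ`. Pairwise amicability of four blocks is all that is
needed for the off-diagonal blocks of `W * Wᵀ` to cancel in the Williamson array `W`; each diagonal
block is then `AAᵀ + BBᵀ + CCᵀ + DDᵀ`. Symmetric circulants are amicable because circulants commute.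
The reflection `R` conjugates a circulant to its transpose, `R Xᵀ = X R`, so
`(A R) Xᵀ = A X R = X A R = X (A R)ᵀ`: multiplying a circulant `A` by `R` makes it amicable with
every circulant, while `(A R)(A R)ᵀ = A Aᵀ` because `R` is a permutation matrix.
-/

section SignMatrix

variable {l m n o α : Type*} [Ring α]

/-- A `(-1,1)`-matrix, over any ring and with arbitrary index types. For square real matrices
indexed by `ZMod n` it unfolds to the same proposition as `IsPM1`. -/
def IsSignMatrix (X : Matrix m n α) : Prop :=
  ∀ i j, X i j = 1 ∨ X i j = -1

theorem IsSignMatrix.neg {X : Matrix m n α} (hX : IsSignMatrix X) : IsSignMatrix (-X) :=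
  fun i j => by rcases hX i j with h | h <;> simp [h]

theorem IsSignMatrix.submatrix {X : Matrix m n α} (hX : IsSignMatrix X) (f : l → m) (g : o → n) :
    IsSignMatrix (X.submatrix f g) :=
  fun i j => hX (f i) (g j)

theorem IsSignMatrix.fromBlocks {X : Matrix l n α} {Y : Matrix l o α} {Z : Matrix m n α}
    {U : Matrix m o α} (hX : IsSignMatrix X) (hY : IsSignMatrix Y) (hZ : IsSignMatrix Z)
    (hU : IsSignMatrix U) : IsSignMatrix (fromBlocks X Y Z U) := by
  rintro (i | i) (j | j)
  exacts [hX i j, hY i j, hZ i j, hU i j]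

end SignMatrix

section Amicable

variable {m n α : Type*} [Fintype n] [Ring α] {X Y Z U : Matrix m n α}

/-- Amicable matrices: over a commutative ring this says that `X * Yᵀ` is symmetric. It is the
relation between blocks that makes the cross terms of a Williamson array cancel. -/
def IsAmicable (X Y : Matrix m n α) : Prop :=
  X * Yᵀ = Y * Xᵀ

theorem IsAmicable.eq (h : IsAmicable X Y) : X * Yᵀ = Y * Xᵀ := h

theorem fromBlocks_neg_self_mul_transpose (h : IsAmicable X Y) :
    fromBlocks X Y (-Y) X * (fromBlocks X Y (-Y) X)ᵀ =
      fromBlocks (X * Xᵀ + Y * Yᵀ) 0 0 (X * Xᵀ + Y * Yᵀ) := by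
  simp only [fromBlocks_transpose, fromBlocks_multiply, transpose_neg, Matrix.mul_neg,
    Matrix.neg_mul, neg_neg, h.eq, neg_add_cancel, add_comm (Y * Yᵀ)]

theorem fromBlocks_self_neg_mul_transpose (h : IsAmicable X Y) :
    fromBlocks X Y Y (-X) * (fromBlocks X Y Y (-X))ᵀ =
      fromBlocks (X * Xᵀ + Y * Yᵀ) 0 0 (X * Xᵀ + Y * Yᵀ) := by
  simp only [fromBlocks_transpose, fromBlocks_multiply, transpose_neg, Matrix.mul_neg,
    Matrix.neg_mul, neg_neg, h.eq, add_neg_cancel, add_comm (Y * Yᵀ)]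

theorem IsAmicable.fromBlocks (hXZ : IsAmicable X Z) (hXU : IsAmicable X U)
    (hYZ : IsAmicable Y Z) (hYU : IsAmicable Y U) :
    IsAmicable (fromBlocks X Y (-Y) X) (fromBlocks Z U U (-Z)) := by
  simp only [IsAmicable, fromBlocks_transpose, fromBlocks_multiply, transpose_neg,
    Matrix.mul_neg, Matrix.neg_mul, hXZ.eq, hXU.eq, hYZ.eq, hYU.eq, add_comm]

end Amicable

section WilliamsonArray

variable {m n α : Type*} [Ring α] {A B C D : Matrix m n α}

/-- The Williamson array with rows `(A, B, C, D)`, `(-B, A, D, -C)`, `(-C, -D, A, B)`,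
`(-D, C, -B, A)`, bracketed as a `2 × 2` block matrix of `2 × 2` block matrices. -/
def williamsonArray (A B C D : Matrix m n α) :
    Matrix ((m ⊕ m) ⊕ (m ⊕ m)) ((n ⊕ n) ⊕ (n ⊕ n)) α :=
  fromBlocks
    (fromBlocks A B (-B) A) (fromBlocks C D D (-C))
    (fromBlocks (-C) (-D) (-D) C) (fromBlocks A B (-B) A)

theorem IsSignMatrix.williamsonArray (hA : IsSignMatrix A) (hB : IsSignMatrix B)
    (hC : IsSignMatrix C) (hD : IsSignMatrix D) : IsSignMatrix (williamsonArray A B C D) :=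
  have hAB := hA.fromBlocks hB hB.neg hA
  hAB.fromBlocks (hC.fromBlocks hD hD hC.neg) (hC.neg.fromBlocks hD.neg hD.neg hC) hAB

theorem williamsonArray_eq_fromBlocks_neg (A B C D : Matrix m n α) :
    williamsonArray A B C D =
      fromBlocks (fromBlocks A B (-B) A) (fromBlocks C D D (-C))
        (-fromBlocks C D D (-C)) (fromBlocks A B (-B) A) := by
  rw [williamsonArray, fromBlocks_neg, neg_neg]

theorem williamsonArray_mul_transpose [Fintype n] [DecidableEq m] {c : α}
    (hAB : IsAmicable A B) (hAC : IsAmicable A C) (hAD : IsAmicable A D)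
    (hBC : IsAmicable B C) (hBD : IsAmicable B D) (hCD : IsAmicable C D)
    (hsum : A * Aᵀ + B * Bᵀ + C * Cᵀ + D * Dᵀ = c • 1) :
    williamsonArray A B C D * (williamsonArray A B C D)ᵀ = c • 1 := by
  have hblocks := IsAmicable.fromBlocks hAC hAD hBC hBD
  have hdiag : A * Aᵀ + B * Bᵀ + (C * Cᵀ + D * Dᵀ) = c • 1 := by rw [← hsum, add_assoc _ (C * Cᵀ)]
  rw [williamsonArray_eq_fromBlocks_neg, fromBlocks_neg_self_mul_transpose hblocks,
    fromBlocks_neg_self_mul_transpose hAB, fromBlocks_self_neg_mul_transpose hCD]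
  simp only [fromBlocks_add, hdiag, add_zero, ← fromBlocks_one, fromBlocks_smul, smul_zero]

end WilliamsonArray

theorem permMatrix_mul_transpose_self {m α : Type*} [Fintype m] [DecidableEq m]
    [NonAssocSemiring α] (σ : Equiv.Perm m) : σ.permMatrix α * (σ.permMatrix α)ᵀ = 1 := by
  rw [transpose_permMatrix, ← permMatrix_mul, inv_mul_cancel, permMatrix_one]

theorem isAmicable_circulant_of_isSymm {G α : Type*} [AddCommGroup G] [Fintype G] [CommRing α]
    {v w : G → α} (hv : (circulant v).IsSymm) (hw : (circulant w).IsSymm) :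
    IsAmicable (circulant v) (circulant w) := by
  rw [IsAmicable, hv.eq, hw.eq, circulant_mul_comm]

section ReflectionMatrix

variable {G α : Type*} [AddCommGroup G] [DecidableEq G] [CommRing α]

variable (α) in
/-- The permutation matrix of the point reflection `g ↦ t - g` of an abelian group, whose entry at
`(i, j)` is `1` if `i + j = t` and `0` otherwise. On `ZMod n` with `t = -1` it is `Rmat n`. -/
def reflectionMatrix (t : G) : Matrix G G α :=
  Equiv.Perm.permMatrix α (Equiv.subLeft t)

theorem transpose_reflectionMatrix (t : G) : (reflectionMatrix α t)ᵀ = reflectionMatrix α t := by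
  have subLeft_inv : (Equiv.subLeft t : Equiv.Perm G)⁻¹ = Equiv.subLeft t := by
    ext g
    simp [sub_eq_neg_add]
  rw [reflectionMatrix, transpose_permMatrix, subLeft_inv]

variable [Fintype G]

theorem mul_reflectionMatrix {m : Type*} (X : Matrix m G α) (t : G) :
    X * reflectionMatrix α t = X.submatrix id (Equiv.subLeft t).symm :=
  PEquiv.mul_toMatrix_toPEquiv X _

theorem reflectionMatrix_mul {m : Type*} (t : G) (X : Matrix G m α) :
    reflectionMatrix α t * X = X.submatrix (Equiv.subLeft t) id :=
  PEquiv.toMatrix_toPEquiv_mul _ X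

theorem mul_reflectionMatrix_mul_transpose {m : Type*} (X : Matrix m G α) (t : G) :
    X * reflectionMatrix α t * (X * reflectionMatrix α t)ᵀ = X * Xᵀ := by
  rw [transpose_mul, Matrix.mul_assoc, ← Matrix.mul_assoc (reflectionMatrix α t),
    reflectionMatrix, permMatrix_mul_transpose_self, Matrix.one_mul]

theorem reflectionMatrix_mul_transpose_circulant (t : G) (v : G → α) :
    reflectionMatrix α t * (circulant v)ᵀ = circulant v * reflectionMatrix α t := by
  ext i j
  have index_eq : j - (t - i) = i - (-j + t) := by abel
  simpa [mul_reflectionMatrix, reflectionMatrix_mul] using congrArg v index_eq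

theorem isAmicable_circulant_mul_reflectionMatrix (t : G) (v w : G → α) :
    IsAmicable (circulant v * reflectionMatrix α t) (circulant w) := by
  set R := reflectionMatrix α t
  calc circulant v * R * (circulant w)ᵀ
      = circulant v * circulant w * R := by
        rw [Matrix.mul_assoc, reflectionMatrix_mul_transpose_circulant, Matrix.mul_assoc]
    _ = circulant w * (circulant v * R) := by rw [circulant_mul_comm, Matrix.mul_assoc]
    _ = circulant w * (circulant v * R)ᵀ := by
        rw [transpose_mul, transpose_reflectionMatrix, reflectionMatrix_mul_transpose_circulant]

end ReflectionMatrix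

theorem nearWilliamson_gives_hadamard_general {G α : Type*} [AddCommGroup G] [Fintype G]
    [DecidableEq G] [CommRing α] (t : G) {A B C D : Matrix G G α}
    (hA : IsSignMatrix A) (hB : IsSignMatrix B) (hC : IsSignMatrix C) (hD : IsSignMatrix D)
    (cA : A ∈ Set.range circulant) (cB : B ∈ Set.range circulant)
    (cC : C ∈ Set.range circulant) (cD : D ∈ Set.range circulant)
    (hBC : IsAmicable B C) (hBD : IsAmicable B D) (hCD : IsAmicable C D)
    (hsum : A * Aᵀ + B * Bᵀ + C * Cᵀ + D * Dᵀ = (4 * Fintype.card G : α) • 1) :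
    let W := williamsonArray (A * reflectionMatrix α t) B C D
    IsSignMatrix W ∧ W * Wᵀ = (4 * Fintype.card G : α) • 1 := by
  obtain ⟨a, rfl⟩ := cA
  obtain ⟨b, rfl⟩ := cB
  obtain ⟨c, rfl⟩ := cC
  obtain ⟨d, rfl⟩ := cD
  have hE : IsSignMatrix (circulant a * reflectionMatrix α t) := by
    rw [mul_reflectionMatrix]
    exact hA.submatrix _ _
  have hamic := isAmicable_circulant_mul_reflectionMatrix t a
  refine ⟨hE.williamsonArray hB hC hD,
    williamsonArray_mul_transpose (hamic b) (hamic c) (hamic d) hBC hBD hCD ?_⟩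
  rwa [mul_reflectionMatrix_mul_transpose]

theorem IsCirculant.mem_range_circulant {n : ℕ} {α : Type*} {X : Matrix (ZMod n) (ZMod n) α}
    (hX : IsCirculant X) : X ∈ Set.range circulant :=
  ⟨fun k => X 0 (-k), by ext i j; rw [circulant_apply, neg_sub, hX i j]⟩

theorem IsCirculant.isAmicable_of_isSymm {n : ℕ} [NeZero n] {α : Type*} [CommRing α]
    {X Y : Matrix (ZMod n) (ZMod n) α} (hX : IsCirculant X) (hY : IsCirculant Y)
    (sX : X.IsSymm) (sY : Y.IsSymm) : IsAmicable X Y := by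
  obtain ⟨v, rfl⟩ := hX.mem_range_circulant
  obtain ⟨w, rfl⟩ := hY.mem_range_circulant
  exact isAmicable_circulant_of_isSymm sX sY

theorem Rmat_eq_reflectionMatrix (n : ℕ) : Rmat n = reflectionMatrix ℝ (-1) := by
  ext i j
  simp [Rmat, reflectionMatrix, PEquiv.toMatrix_apply, eq_sub_iff_add_eq', eq_comm]

/-- Near Williamson matrices of order `n` give a Hadamard matrix of
order `4n`: the Williamson array built from `AR, B, C, D` is a `(-1,1)`-matrix `W`
with `WWᵀ = 4n·I`. -/
theorem nearWilliamson_gives_hadamard (n : ℕ) [NeZero n]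
    (A B C D : Matrix (ZMod n) (ZMod n) ℝ) (h : IsNearWilliamson n A B C D) :
    let E := A * Rmat n
    let W := Matrix.fromBlocks
      (Matrix.fromBlocks E B (-B) E) (Matrix.fromBlocks C D D (-C))
      (Matrix.fromBlocks (-C) (-D) (-D) C) (Matrix.fromBlocks E B (-B) E)
    (∀ i j, W i j = 1 ∨ W i j = -1) ∧ W * Wᵀ = (4 * n : ℝ) • 1 := by
  obtain ⟨pA, pB, pC, pD, cA, cB, cC, cD, sB, sC, sD, hsum⟩ := h
  rw [Rmat_eq_reflectionMatrix]
  simpa only [williamsonArray, IsSignMatrix, ZMod.card] using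
    nearWilliamson_gives_hadamard_general (-1) pA pB pC pD
      cA.mem_range_circulant cB.mem_range_circulant cC.mem_range_circulant cD.mem_range_circulant
      (cB.isAmicable_of_isSymm cC sB sC) (cB.isAmicable_of_isSymm cD sB sD)
      (cC.isAmicable_of_isSymm cD sC sD) (by rwa [ZMod.card])
end

section
/- Let A, B, C, D be near Williamson matrices of order n. Then there exists a quaternary Hadamard matrix of order 2n. -/
open Matrix

/-!
Reversing the columns of the circulant matrix `A` gives a back circulant matrix `P`, which is
symmetric, commutes with every symmetric circulant matrix, and satisfies `P Pᵀ = A Aᵀ`. So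
`P, B, C, D` are symmetric and pairwise commuting. With `ω = (1 + i) / 2`, the matrices
`X = ω P + ω̄ B` and `Y = ω C + ω̄ D` have entries in `{±1, ±i}`, are normal, commute, and satisfy
`X X* + Y Y* = (P² + B² + C² + D²) / 2 = 2n I`. Hence the block matrix with rows `(X, Y)` and
`(-Y*, X*)` is quaternary Hadamard.
-/

section Circulant

variable {G α : Type*}

/-- The back circulant matrix with first row `v`, over an arbitrary additive index type. Over a
group it is `circulant v` with its columns permuted by `j ↦ -j`, which makes it symmetric. -/
def backCirculant [Add G] (v : G → α) : Matrix G G α :=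
  of fun i j => v (i + j)

theorem backCirculant_isSymm [AddCommMagma G] (v : G → α) : (backCirculant v).IsSymm :=
  Matrix.ext fun i j => congrArg v (add_comm j i)

theorem backCirculant_mul_transpose [AddGroup G] [Fintype G] [Mul α] [AddCommMonoid α]
    (v w : G → α) :
    backCirculant v * (backCirculant w)ᵀ = circulant v * (circulant w)ᵀ := by
  ext i j
  simp only [mul_apply, transpose_apply, backCirculant, of_apply, circulant_apply]
  exact Fintype.sum_equiv (Equiv.neg G) _ _ fun k => by simp

theorem commute_backCirculant_circulant [AddCommGroup G] [Fintype G]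
    [CommMagma α] [AddCommMonoid α] (v : G → α) {w : G → α} (hw : (circulant w).IsSymm) :
    Commute (backCirculant v) (circulant w) := by
  ext i j
  simp only [mul_apply, backCirculant, of_apply, circulant_apply]
  refine Fintype.sum_equiv (Equiv.addRight (i - j)) _ _ fun k => ?_
  have hkj : w (i - (k + (i - j))) = w (k - j) := by
    rw [← circulant_isSymm_apply hw (k - j)]
    congr 1
    abel
  have hik : k + (i - j) + j = i + k := by abel
  rw [Equiv.coe_addRight, hkj, hik, mul_comm]

theorem IsCirculant.circulant_col_zero {n : ℕ} {X : Matrix (ZMod n) (ZMod n) α}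
    (hX : IsCirculant X) : circulant (X · 0) = X :=
  Matrix.ext fun i j => by rw [circulant_apply, hX (i - j) 0, hX i j, zero_sub, neg_sub]

end Circulant

section QuaternaryCombination

/-- The combination `ω p + ω̄ q` with `ω = (1 + i) / 2`, which encodes a pair of real objects as a
single quaternary one. It works because `ω ω̄ = 1 / 2` and `ω² + ω̄² = 0`. -/
noncomputable def quaternaryCombination {R : Type*} [Add R] [SMul ℂ R] (p q : R) : R :=
  ((1 + Complex.I) / 2) • p + ((1 - Complex.I) / 2) • q

theorem star_quaternaryCombination {R : Type*} [AddCommMonoid R] [StarAddMonoid R] [SMul ℂ R]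
    [StarModule ℂ R] {p q : R} (hp : IsSelfAdjoint p) (hq : IsSelfAdjoint q) :
    star (quaternaryCombination p q) = quaternaryCombination q p := by
  simp [quaternaryCombination, hp.star_eq, hq.star_eq, sub_eq_add_neg, add_comm]

variable {R : Type*} [Ring R] [Algebra ℂ R] {p q p' q' : R}

theorem commute_quaternaryCombination (hpp' : Commute p p') (hpq' : Commute p q')
    (hqp' : Commute q p') (hqq' : Commute q q') :
    Commute (quaternaryCombination p q) (quaternaryCombination p' q') :=
  have hright {r : R} (hp' : Commute r p') (hq' : Commute r q') :
      Commute r (quaternaryCombination p' q') :=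
    (hp'.smul_right _).add_right (hq'.smul_right _)
  ((hright hpp' hpq').smul_left _).add_left ((hright hqp' hqq').smul_left _)

theorem quaternaryCombination_mul_swap (h : Commute p q) :
    quaternaryCombination p q * quaternaryCombination q p =
      (1 / 2 : ℂ) • (p * p + q * q) := by
  have hsq : Complex.I ^ 2 = -1 := Complex.I_sq
  simp only [quaternaryCombination, mul_add, add_mul, smul_mul_smul_comm, h.eq, smul_add]
  match_scalars <;> grind

variable [StarRing R] [StarModule ℂ R]

theorem isStarNormal_quaternaryCombination (hp : IsSelfAdjoint p) (hq : IsSelfAdjoint q)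
    (h : Commute p q) : IsStarNormal (quaternaryCombination p q) where
  star_comm_self := by
    rw [star_quaternaryCombination hp hq]
    exact commute_quaternaryCombination h.symm (.refl q) (.refl p) h

theorem quaternaryCombination_mul_star (hp : IsSelfAdjoint p) (hq : IsSelfAdjoint q)
    (h : Commute p q) :
    quaternaryCombination p q * star (quaternaryCombination p q) =
      (1 / 2 : ℂ) • (p * p + q * q) := by
  rw [star_quaternaryCombination hp hq, quaternaryCombination_mul_swap h]

end QuaternaryCombination

section QuaternaryUnits

/-- The complex fourth roots of unity, the admissible entries of a quaternary Hadamard matrix. -/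
def quaternaryUnits : Set ℂ := {-Complex.I, -1, 1, Complex.I}

theorem quaternaryUnits_subset_unitary : quaternaryUnits ⊆ unitary ℂ := by
  rintro z (rfl | rfl | rfl | rfl) <;> simp [Unitary.mem_iff]

theorem neg_mem_quaternaryUnits {z : ℂ} (hz : z ∈ quaternaryUnits) : -z ∈ quaternaryUnits := by
  rcases hz with rfl | rfl | rfl | rfl <;> simp [quaternaryUnits]

theorem star_mem_quaternaryUnits {z : ℂ} (hz : z ∈ quaternaryUnits) :
    star z ∈ quaternaryUnits := by
  rcases hz with rfl | rfl | rfl | rfl <;> simp [quaternaryUnits]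

theorem quaternaryCombination_mem_quaternaryUnits {x y : ℝ} (hx : x = 1 ∨ x = -1)
    (hy : y = 1 ∨ y = -1) : quaternaryCombination (x : ℂ) (y : ℂ) ∈ quaternaryUnits := by
  rcases hx with rfl | rfl <;> rcases hy with rfl | rfl <;>
    simp only [quaternaryCombination, quaternaryUnits, Set.mem_insert_iff,
      Set.mem_singleton_iff, smul_eq_mul, Complex.ofReal_one, Complex.ofReal_neg]
  · right; right; left; ring
  · right; right; right; ring
  · left; ring
  · right; left; ring

end QuaternaryUnits

section BlockMatrix

variable {ι : Type*} [Fintype ι]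

theorem fromBlocks_mul_conjTranspose_of_commute {α : Type*} [Ring α] [StarRing α]
    {X Y : Matrix ι ι α} [IsStarNormal X] [IsStarNormal Y] (h : Commute X Y) :
    fromBlocks X Y (-Yᴴ) Xᴴ * (fromBlocks X Y (-Yᴴ) Xᴴ)ᴴ =
      fromBlocks (X * Xᴴ + Y * Yᴴ) 0 0 (X * Xᴴ + Y * Yᴴ) := by
  have hX : Xᴴ * X = X * Xᴴ := star_comm_self' X
  have hY : Yᴴ * Y = Y * Yᴴ := star_comm_self' Y
  have hstar : Xᴴ * Yᴴ = Yᴴ * Xᴴ := by rw [← conjTranspose_mul, ← conjTranspose_mul, h.eq]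
  simp only [fromBlocks_conjTranspose, fromBlocks_multiply, conjTranspose_neg,
    conjTranspose_conjTranspose, mul_neg, neg_mul, neg_neg, hX, hY, h.eq, hstar,
    neg_add_cancel, add_comm (Y * Yᴴ)]

variable [DecidableEq ι]

/-- Quaternary Hadamard matrices, with rows and columns indexed by an arbitrary finite type. -/
structure IsQuaternaryHadamard (H : Matrix ι ι ℂ) : Prop where
  apply_mem : ∀ i j, H i j ∈ quaternaryUnits
  isHadamard : H.IsHadamard

theorem IsQuaternaryHadamard.reindex {κ : Type*} [Fintype κ] [DecidableEq κ] {H : Matrix ι ι ℂ}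
    (hH : IsQuaternaryHadamard H) (e : ι ≃ κ) : IsQuaternaryHadamard (Matrix.reindex e e H) :=
  ⟨fun i j => hH.apply_mem (e.symm i) (e.symm j), hH.isHadamard.reindex e e⟩

theorem isQuaternaryHadamard_fromBlocks [Nonempty ι] {X Y : Matrix ι ι ℂ} [IsStarNormal X]
    [IsStarNormal Y] (hX : ∀ i j, X i j ∈ quaternaryUnits)
    (hY : ∀ i j, Y i j ∈ quaternaryUnits) (hXY : Commute X Y)
    (hsum : X * Xᴴ + Y * Yᴴ = (2 * Fintype.card ι : ℂ) • 1) :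
    IsQuaternaryHadamard (fromBlocks X Y (-Yᴴ) Xᴴ) := by
  have hmem : ∀ i j, fromBlocks X Y (-Yᴴ) Xᴴ i j ∈ quaternaryUnits := by
    rintro (i | i) (j | j)
    · exact hX i j
    · exact hY i j
    · exact neg_mem_quaternaryUnits (star_mem_quaternaryUnits (hY j i))
    · exact star_mem_quaternaryUnits (hX j i)
  have hcard : (Fintype.card (ι ⊕ ι) : ℂ) = 2 * Fintype.card ι := by
    rw [Fintype.card_sum, Nat.cast_add, two_mul]
  have hmul : fromBlocks X Y (-Yᴴ) Xᴴ * (fromBlocks X Y (-Yᴴ) Xᴴ)ᴴ =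
      (Fintype.card (ι ⊕ ι) : ℂ) • 1 := by
    rw [fromBlocks_mul_conjTranspose_of_commute hXY, hsum, hcard, ← fromBlocks_one,
      fromBlocks_smul, smul_zero]
  have hne : (Fintype.card (ι ⊕ ι) : ℂ) ≠ 0 := Nat.cast_ne_zero.mpr Fintype.card_ne_zero
  exact ⟨hmem, .of_mul_conjTranspose (fun i j => quaternaryUnits_subset_unitary (hmem i j)) hmul
    (.of_ne_zero hne)⟩

end BlockMatrix

/-- Williamson-type matrices: four symmetric, pairwise commuting `(-1,1)`-matrices whose squares
add up to `4n I`, where `n` is the size of the index type. -/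
structure IsWilliamsonType {ι : Type*} [Fintype ι] [DecidableEq ι]
    (W : Fin 4 → Matrix ι ι ℝ) : Prop where
  apply_eq_or : ∀ k i j, W k i j = 1 ∨ W k i j = -1
  isSymm : ∀ k, (W k).IsSymm
  commute : ∀ k l, Commute (W k) (W l)
  sum_mul_self : ∑ k, W k * W k = (4 * Fintype.card ι : ℝ) • 1

theorem IsWilliamsonType.exists_isQuaternaryHadamard {ι : Type*} [Fintype ι] [DecidableEq ι]
    [Nonempty ι] {W : Fin 4 → Matrix ι ι ℝ} (hW : IsWilliamsonType W) :
    ∃ H : Matrix (ι ⊕ ι) (ι ⊕ ι) ℂ, IsQuaternaryHadamard H := by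
  let Z (k : Fin 4) : Matrix ι ι ℂ := Complex.ofRealHom.mapMatrix (W k)
  have hself (k) : IsSelfAdjoint (Z k) :=
    Matrix.ext fun i j => by simp [Z, star_apply, (hW.isSymm k).apply]
  have hcomm (k l) : Commute (Z k) (Z l) := (hW.commute k l).map _
  have hmem (k l i j) : quaternaryCombination (Z k) (Z l) i j ∈ quaternaryUnits :=
    quaternaryCombination_mem_quaternaryUnits (hW.apply_eq_or k i j) (hW.apply_eq_or l i j)
  have hsum : ∑ k, Z k * Z k = (4 * Fintype.card ι : ℂ) • 1 := calc
    ∑ k, Z k * Z k = Complex.ofRealHom.mapMatrix (∑ k, W k * W k) := by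
      simp only [Z, map_sum, map_mul]
    _ = (4 * Fintype.card ι : ℂ) • 1 := by
      rw [hW.sum_mul_self]
      ext i j
      simp [one_apply, apply_ite]
  have hnormal₀₁ := isStarNormal_quaternaryCombination (hself 0) (hself 1) (hcomm 0 1)
  have hnormal₂₃ := isStarNormal_quaternaryCombination (hself 2) (hself 3) (hcomm 2 3)
  refine ⟨_, isQuaternaryHadamard_fromBlocks (hmem 0 1) (hmem 2 3)
    (commute_quaternaryCombination (hcomm 0 2) (hcomm 0 3) (hcomm 1 2) (hcomm 1 3)) ?_⟩
  rw [← star_eq_conjTranspose, ← star_eq_conjTranspose,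
    quaternaryCombination_mul_star (hself 0) (hself 1) (hcomm 0 1),
    quaternaryCombination_mul_star (hself 2) (hself 3) (hcomm 2 3),
    ← smul_add, ← add_assoc, ← Fin.sum_univ_four (fun k => Z k * Z k), hsum, smul_smul]
  congr 1
  ring

/-- Near Williamson matrices over a finite abelian group `G`, given by their first columns
`a`, `b`, `c`, `d`; the case `G = ZMod n` is `IsNearWilliamson n`. -/
structure IsGroupNearWilliamson {G : Type*} [AddCommGroup G] [Fintype G] [DecidableEq G]
    (a b c d : G → ℝ) : Prop where
  eq_or_a : ∀ g, a g = 1 ∨ a g = -1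
  eq_or_b : ∀ g, b g = 1 ∨ b g = -1
  eq_or_c : ∀ g, c g = 1 ∨ c g = -1
  eq_or_d : ∀ g, d g = 1 ∨ d g = -1
  isSymm_b : (circulant b).IsSymm
  isSymm_c : (circulant c).IsSymm
  isSymm_d : (circulant d).IsSymm
  sum_mul_transpose : circulant a * (circulant a)ᵀ + circulant b * (circulant b)ᵀ +
    circulant c * (circulant c)ᵀ + circulant d * (circulant d)ᵀ = (4 * Fintype.card G : ℝ) • 1

theorem IsNearWilliamson.isGroupNearWilliamson {n : ℕ} [NeZero n]
    {A B C D : Matrix (ZMod n) (ZMod n) ℝ} (h : IsNearWilliamson n A B C D) :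
    IsGroupNearWilliamson (A · 0) (B · 0) (C · 0) (D · 0) := by
  obtain ⟨pA, pB, pC, pD, cA, cB, cC, cD, sB, sC, sD, hsum⟩ := h
  refine ⟨(pA · 0), (pB · 0), (pC · 0), (pD · 0), ?_, ?_, ?_, ?_⟩ <;>
    simp only [cA.circulant_col_zero, cB.circulant_col_zero, cC.circulant_col_zero,
      cD.circulant_col_zero, ZMod.card, sB, sC, sD, hsum]

theorem IsGroupNearWilliamson.isWilliamsonType {G : Type*} [AddCommGroup G] [Fintype G]
    [DecidableEq G] {a b c d : G → ℝ} (h : IsGroupNearWilliamson a b c d) :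
    IsWilliamsonType ![backCirculant a, circulant b, circulant c, circulant d] where
  apply_eq_or := by
    simp [Fin.forall_fin_succ, backCirculant, circulant_apply, h.eq_or_a, h.eq_or_b, h.eq_or_c,
      h.eq_or_d]
  isSymm := by
    simp [Fin.forall_fin_succ, backCirculant_isSymm, h.isSymm_b, h.isSymm_c, h.isSymm_d]
  commute := by
    have hback {v : G → ℝ} := commute_backCirculant_circulant a (w := v)
    have hcirc (v w : G → ℝ) : Commute (circulant v) (circulant w) := circulant_mul_comm v w
    simp [Fin.forall_fin_succ, hback, (hback _).symm, hcirc, h.isSymm_b, h.isSymm_c, h.isSymm_d]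
  sum_mul_self := by
    have hsum := h.sum_mul_transpose
    rw [← backCirculant_mul_transpose, (backCirculant_isSymm a).eq, h.isSymm_b.eq,
      h.isSymm_c.eq, h.isSymm_d.eq] at hsum
    simpa [Fin.sum_univ_four] using hsum

theorem nearWilliamson_gives_quaternary_hadamard_general {G κ : Type*} [AddCommGroup G]
    [Fintype G] [DecidableEq G] [Fintype κ] [DecidableEq κ]
    (hκ : Fintype.card κ = 2 * Fintype.card G) {a b c d : G → ℝ}
    (h : IsGroupNearWilliamson a b c d) : ∃ H : Matrix κ κ ℂ, IsQuaternaryHadamard H := by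
  obtain ⟨H, hH⟩ := h.isWilliamsonType.exists_isQuaternaryHadamard
  have e : G ⊕ G ≃ κ := Fintype.equivOfCardEq (by rw [Fintype.card_sum, hκ, two_mul])
  exact ⟨_, hH.reindex e⟩

/-- Near Williamson matrices of order `n` give a quaternary Hadamard
matrix of order `2n`: a `2n × 2n` complex matrix `H` with entries in `{-i, -1, 1, i}`
satisfying `HH* = 2n·I`. -/
theorem nearWilliamson_gives_quaternary_hadamard (n : ℕ) [NeZero n]
    (A B C D : Matrix (ZMod n) (ZMod n) ℝ) (h : IsNearWilliamson n A B C D) :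
    ∃ H : Matrix (Fin (2 * n)) (Fin (2 * n)) ℂ,
      (∀ i j, H i j ∈ ({-Complex.I, -1, 1, Complex.I} : Set ℂ)) ∧
      H * Hᴴ = (2 * n : ℂ) • 1 := by
  obtain ⟨H, hmem, hH⟩ := nearWilliamson_gives_quaternary_hadamard_general
    (κ := Fin (2 * n)) (by rw [Fintype.card_fin, ZMod.card]) h.isGroupNearWilliamson
  exact ⟨H, hmem, by simpa using hH.mul_conjTranspose⟩
end

section
/- There exist near Williamson matrices of order 53; that is, there exist a 53×53 circulant (-1,1)-matrix A and three 53×53 symmetric circulant (-1,1)-matrices B, C, D such that AAᵀ + BBᵀ + CCᵀ + DDᵀ = 212·I. -/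
open Matrix

/-!
If `A` is the circulant matrix of the `±1`-vector taking the value `-1` exactly on `S ⊆ ℤ/n`, then
`AAᵀ` is the circulant matrix of the periodic autocorrelation of that vector, whose value at `s` is
`n - 4|S| + 4 λ_S(s)`, where `λ_S(s)` counts the pairs in `S` with difference `s`. Hence four
blocks in `ℤ/n` yield `AAᵀ + BBᵀ + CCᵀ + DDᵀ = 4n·I` as soon as their difference counts add up to
the constant `λ = ∑ |Sᵢ| - n` at every `s ≠ 0`, and a block with `S = -S` yields a symmetric matrix.
It remains to exhibit such blocks for `n = 53`.
-/

theorem isCirculant_circulant {n : ℕ} {α : Type*} (v : ZMod n → α) :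
    IsCirculant (circulant v) := fun i j => by
  simp only [circulant_apply, zero_sub, neg_sub]

section Autocorrelation

variable {G R : Type*} [AddGroup G] [Fintype G] [NonUnitalNonAssocSemiring R]

/-- The periodic autocorrelation of a vector indexed by a finite group; for `G = ZMod n` this is the
usual periodic autocorrelation of a sequence of length `n`. -/
def autocorrelation (v : G → R) (s : G) : R :=
  ∑ x, v (s + x) * v x

theorem circulant_mul_transpose_self (v : G → R) :
    circulant v * (circulant v)ᵀ = circulant (autocorrelation v) := by
  ext i j
  simp only [mul_apply, transpose_apply, circulant_apply, autocorrelation]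
  refine Fintype.sum_equiv (Equiv.subLeft j) _ _ fun k => ?_
  rw [Equiv.subLeft_apply, sub_add_sub_cancel]

end Autocorrelation

section SignVector

variable {G : Type*} [DecidableEq G]

/-- The `±1`-vector with value `-1` exactly on `S`. -/
def signVector (R : Type*) [One R] [Neg R] (S : Finset G) (x : G) : R :=
  if x ∈ S then -1 else 1

theorem isPM1_circulant_signVector {n : ℕ} (S : Finset (ZMod n)) :
    IsPM1 (circulant (signVector ℝ S)) := fun i j => by
  rw [circulant_apply, signVector]
  split_ifs
  exacts [.inr rfl, .inl rfl]

theorem signVector_mul_signVector (R : Type*) [Ring R] (S : Finset G) (x y : G) :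
    signVector R S x * signVector R S y =
      1 - 2 * (if x ∈ S then 1 else 0) - 2 * (if y ∈ S then 1 else 0) +
        4 * (if y ∈ S ∧ x ∈ S then 1 else 0) := by
  by_cases hx : x ∈ S <;> by_cases hy : y ∈ S <;> simp [signVector, hx, hy] <;> norm_num

variable [AddGroup G]

open scoped Pointwise in
theorem isSymm_circulant_signVector (R : Type*) [One R] [Neg R] {S : Finset G} (hS : -S = S) :
    (circulant (signVector R S)).IsSymm := by
  refine circulant_isSymm_iff.mpr fun x => ?_
  have neg_mem_iff : -x ∈ S ↔ x ∈ S := by rw [← Finset.mem_neg', hS]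
  simp only [signVector, neg_mem_iff]

/-- The number of ordered pairs of elements of `S` with difference `s`, counted by the
subtrahend. -/
def differenceCount (S : Finset G) (s : G) : ℕ :=
  (S.filter fun x => s + x ∈ S).card

theorem differenceCount_zero (S : Finset G) : differenceCount S 0 = S.card := by
  simp [differenceCount]

theorem autocorrelation_signVector [Fintype G] (R : Type*) [Ring R] (S : Finset G) (s : G) :
    autocorrelation (signVector R S) s =
      Fintype.card G - 4 * S.card + 4 * differenceCount S s := by
  have sum_mem : ∑ x, (if x ∈ S then (1 : R) else 0) = S.card := by simp
  have sum_translate_mem : ∑ x, (if s + x ∈ S then (1 : R) else 0) = S.card := by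
    rw [← sum_mem]
    exact Fintype.sum_equiv (Equiv.addLeft s) _ _ fun _ => rfl
  have sum_both_mem :
      ∑ x, (if x ∈ S ∧ s + x ∈ S then (1 : R) else 0) = differenceCount S s := by
    rw [Finset.sum_boole, ← Finset.filter_filter, Finset.filter_univ_mem, differenceCount]
  simp only [autocorrelation, signVector_mul_signVector, Finset.sum_add_distrib,
    Finset.sum_sub_distrib, ← Finset.mul_sum, sum_mem, sum_translate_mem, sum_both_mem,
    Finset.sum_const, Finset.card_univ, nsmul_one]
  noncomm_ring

end SignVector

section SupplementaryDifferenceSets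

variable {ι G : Type*} [Fintype ι] [AddGroup G] [DecidableEq G]

/-- The blocks `S i` are supplementary difference sets with parameter `lam`: every nonzero group
element occurs exactly `lam` times in total as a difference within a block. -/
def IsSupplementaryDifferenceSets (S : ι → Finset G) (lam : ℕ) : Prop :=
  ∀ s ≠ 0, ∑ i, differenceCount (S i) s = lam

variable [Fintype G]

theorem IsSupplementaryDifferenceSets.sum_autocorrelation_signVector {S : ι → Finset G} {lam : ℕ}
    (hS : IsSupplementaryDifferenceSets S lam) (R : Type*) [Ring R]
    (hcard : Fintype.card ι * Fintype.card G + 4 * lam = 4 * ∑ i, (S i).card) (s : G) :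
    ∑ i, autocorrelation (signVector R (S i)) s =
      if s = 0 then (Fintype.card ι * Fintype.card G : R) else 0 := by
  split_ifs with hs
  · simp [hs, autocorrelation_signVector, differenceCount_zero]
  · have hcard' : (Fintype.card ι * Fintype.card G + 4 * lam : R) = 4 * ∑ i, ((S i).card : R) := by
      simpa using congrArg (Nat.cast : ℕ → R) hcard
    calc ∑ i, autocorrelation (signVector R (S i)) s
        = Fintype.card ι * Fintype.card G - 4 * ∑ i, ((S i).card : R) +
            4 * (∑ i, differenceCount (S i) s : ℕ) := by
          simp [autocorrelation_signVector, Finset.sum_add_distrib, Finset.mul_sum]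
      _ = 0 := by rw [hS s hs, ← hcard']; abel

theorem IsSupplementaryDifferenceSets.sum_circulant_mul_transpose {S : ι → Finset G} {lam : ℕ}
    (hS : IsSupplementaryDifferenceSets S lam) (R : Type*) [Ring R]
    (hcard : Fintype.card ι * Fintype.card G + 4 * lam = 4 * ∑ i, (S i).card) :
    ∑ i, circulant (signVector R (S i)) * (circulant (signVector R (S i)))ᵀ =
      (Fintype.card ι * Fintype.card G : R) • 1 := by
  ext i j
  simp only [circulant_mul_transpose_self, Matrix.sum_apply, circulant_apply,
    hS.sum_autocorrelation_signVector R hcard, sub_eq_zero, Matrix.smul_apply, one_apply,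
    smul_eq_mul, mul_ite, mul_one, mul_zero]

end SupplementaryDifferenceSets

open scoped Pointwise in
theorem exists_nearWilliamson_of_isSupplementaryDifferenceSets {n : ℕ} [NeZero n]
    {S : Fin 4 → Finset (ZMod n)} {lam : ℕ} (hS : IsSupplementaryDifferenceSets S lam)
    (hcard : n + lam = ∑ i, (S i).card)
    (neg_one : -S 1 = S 1) (neg_two : -S 2 = S 2) (neg_three : -S 3 = S 3) :
    ∃ A B C D : Matrix (ZMod n) (ZMod n) ℝ,
      IsPM1 A ∧ IsPM1 B ∧ IsPM1 C ∧ IsPM1 D ∧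
      IsCirculant A ∧ IsCirculant B ∧ IsCirculant C ∧ IsCirculant D ∧
      B.IsSymm ∧ C.IsSymm ∧ D.IsSymm ∧
      A * Aᵀ + B * Bᵀ + C * Cᵀ + D * Dᵀ = (4 * n : ℝ) • 1 := by
  let M (i : Fin 4) : Matrix (ZMod n) (ZMod n) ℝ := circulant (signVector ℝ (S i))
  have pm1 (i : Fin 4) : IsPM1 (M i) := isPM1_circulant_signVector _
  have circ (i : Fin 4) : IsCirculant (M i) := isCirculant_circulant _
  have gram : ∑ i, M i * (M i)ᵀ = (4 * n : ℝ) • 1 := by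
    simpa only [Fintype.card_fin, ZMod.card, Nat.cast_ofNat] using
      hS.sum_circulant_mul_transpose ℝ (by rw [Fintype.card_fin, ZMod.card, ← hcard, mul_add])
  rw [Fin.sum_univ_four] at gram
  exact ⟨M 0, M 1, M 2, M 3, pm1 0, pm1 1, pm1 2, pm1 3, circ 0, circ 1, circ 2, circ 3,
    isSymm_circulant_signVector ℝ neg_one, isSymm_circulant_signVector ℝ neg_two,
    isSymm_circulant_signVector ℝ neg_three, gram⟩

section Blocks

open scoped Pointwise

/-- The smallest set containing `T` and closed under negation. -/
def symmetrization {G : Type*} [DecidableEq G] [AddGroup G] (T : Finset G) : Finset G :=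
  T ∪ -T

theorem neg_symmetrization {G : Type*} [DecidableEq G] [AddGroup G] (T : Finset G) :
    -symmetrization T = symmetrization T := by
  ext x
  simp only [symmetrization, Finset.mem_neg', Finset.mem_union, neg_neg, or_comm]

/-- Supplementary difference sets in `ZMod 53` with block sizes `22, 26, 22, 30` and parameter
`47 = 22 + 26 + 22 + 30 - 53`; the last three blocks are closed under negation. -/
def nearWilliamsonBlocks : Fin 4 → Finset (ZMod 53) :=
  ![{2, 5, 6, 8, 11, 12, 13, 16, 18, 23, 25, 26, 29, 34, 35, 37, 39, 42, 43, 44, 49, 51},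
    symmetrization {1, 2, 3, 4, 7, 11, 13, 14, 15, 16, 17, 22, 24},
    symmetrization {5, 7, 12, 13, 16, 17, 18, 20, 21, 24, 26},
    symmetrization {2, 3, 4, 5, 7, 8, 11, 14, 15, 19, 21, 23, 24, 25, 26}]

theorem sum_card_nearWilliamsonBlocks : ∑ i, (nearWilliamsonBlocks i).card = 100 := by
  decide +kernel

theorem isSupplementaryDifferenceSets_nearWilliamsonBlocks :
    IsSupplementaryDifferenceSets nearWilliamsonBlocks 47 := by
  unfold IsSupplementaryDifferenceSets
  decide +kernel

end Blocks

/-- There exist near Williamson matrices of order 53: a circulant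
`(-1,1)`-matrix `A` and symmetric circulant `(-1,1)`-matrices `B, C, D` of order
53 with `AAᵀ + BBᵀ + CCᵀ + DDᵀ = 212·I`. -/
theorem exists_nearWilliamson_53 :
    ∃ A B C D : Matrix (ZMod 53) (ZMod 53) ℝ,
      IsPM1 A ∧ IsPM1 B ∧ IsPM1 C ∧ IsPM1 D ∧
      IsCirculant A ∧ IsCirculant B ∧ IsCirculant C ∧ IsCirculant D ∧
      B.IsSymm ∧ C.IsSymm ∧ D.IsSymm ∧
      A * Aᵀ + B * Bᵀ + C * Cᵀ + D * Dᵀ = (212 : ℝ) • 1 := by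
  have order_mul_four : (212 : ℝ) = 4 * (53 : ℕ) := by norm_num
  rw [order_mul_four]
  exact exists_nearWilliamson_of_isSupplementaryDifferenceSets
    isSupplementaryDifferenceSets_nearWilliamsonBlocks sum_card_nearWilliamsonBlocks.symm
    (neg_symmetrization _) (neg_symmetrization _) (neg_symmetrization _)
end
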